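/- Let k be an algebraically closed field of characteristic zero, let g be a finite-dimensional semisimple Lie algebra over k, let b be a Borel subalgebra of g (a maximal solvable Lie subalgebra), let h ⊆ b be a Cartan subalgebra of g, and let p be a Lie subalgebra with h ⊆ p ⊆ b. If p is Frobenius and two-step solvable, then dim p is even, say dim p = 2n, and p is isomorphic as a Lie algebra to Φ_n, the product of n copies of the two-dimensional non-abelian Lie algebra t₂. -/

import Mathlib

/-- A Borel subalgebra: a maximal solvable Lie subalgebra. -/
def IsBorelSubalgebra (k : Type*) {g : Type*} [Field k] [LieRing g] [LieAlgebra k g]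
    (b : LieSubalgebra k g) : Prop :=
  LieAlgebra.IsSolvable ↥b ∧
    ∀ c : LieSubalgebra k g, LieAlgebra.IsSolvable ↥c → b ≤ c → c = b

/-- A finite-dimensional Lie algebra is Frobenius if some functional `f` has nondegenerate
Kirillov form `B_f(x,y) = f ⁅x,y⁆`. -/
def IsFrobeniusLieAlgebra (k L : Type*) [Field k] [LieRing L] [LieAlgebra k L] : Prop :=
  ∃ f : Module.Dual k L, ∀ y : L, (∀ x : L, f ⁅x, y⁆ = 0) → y = 0

/-- A Lie algebra is two-step solvable if `⁅L,L⁆ ≠ 0` and `⁅⁅L,L⁆,⁅L,L⁆⁆ = 0`. -/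
def IsTwoStepSolvable (k L : Type*) [Field k] [LieRing L] [LieAlgebra k L] : Prop :=
  LieAlgebra.derivedSeries k L 1 ≠ ⊥ ∧ LieAlgebra.derivedSeries k L 2 = ⊥

/-- `B` is a basis exhibiting a Lie algebra as `Φ_n = t₂ × ⋯ × t₂` (`n` copies of the
two-dimensional non-abelian Lie algebra): writing `d i = B (Sum.inl i)` and
`e i = B (Sum.inr i)`, the only nonzero brackets of basis vectors are
`⁅d i, e i⁆ = e i`. -/
def IsPhiBasis {k L : Type*} [CommRing k] [LieRing L] [LieAlgebra k L] {n : ℕ}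
    (B : Module.Basis (Fin n ⊕ Fin n) k L) : Prop :=
  (∀ i j : Fin n, ⁅B (Sum.inl i), B (Sum.inl j)⁆ = 0) ∧
  (∀ i j : Fin n, ⁅B (Sum.inr i), B (Sum.inr j)⁆ = 0) ∧
  (∀ i j : Fin n, ⁅B (Sum.inl i), B (Sum.inr j)⁆ = if i = j then B (Sum.inr i) else 0)

/-!
Since `k` has characteristic zero and `g` is semisimple, `H` is abelian and `g` is the sum of `H`
and of root spaces on which `H` acts by scalars; as `H ≤ p`, the subalgebra `p` is the sum of `H`
and of its part `E` spanned by root vectors. Every root vector is a multiple of its own bracket with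
an element of `H`, so `E ⊆ ⁅p, p⁆` and two-step solvability makes `E` abelian.

Thus `H` and `E` are both isotropic for any Kirillov form `B_f`. If `B_f` is nondegenerate, then
`p = H ⊕ E` is a decomposition into Lagrangian subspaces and `B_f` pairs `H` and `E` perfectly. Take
a basis `e_i` of `E` consisting of root vectors, with roots `α_i`. Nondegeneracy gives `f e_i ≠ 0`,
so one may normalize `f e_i = 1`. The basis `d_i` of `H` dual to `e_i` under `B_f` then satisfies
`α_j d_i = f ⁅d_i, e_j⁆ = δ_{ij}`, which are the relations of `Φ_n`.
-/

section BilinearForm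

section CommRing

variable {R M : Type*} [CommRing R] [AddCommGroup M] [Module R M] {B : LinearMap.BilinForm R M}
  {U W : Submodule R M}

theorem disjoint_orthogonalBilin_of_codisjoint (hB : B.SeparatingRight) (hUW : Codisjoint U W) :
    Disjoint (U.orthogonalBilin B) (W.orthogonalBilin B) := by
  refine Submodule.disjoint_def.mpr fun y hyU hyW ↦ hB y fun x ↦ ?_
  obtain ⟨u, w, hu, hw, rfl⟩ := Submodule.codisjoint_iff_exists_add_eq.mp hUW x
  rw [map_add, LinearMap.add_apply, hyU u hu, hyW w hw, add_zero]

theorem isCompl_of_le_orthogonalBilin (hB : B.SeparatingRight) (hU : U ≤ U.orthogonalBilin B)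
    (hW : W ≤ W.orthogonalBilin B) (hUW : Codisjoint U W) : IsCompl U W :=
  ⟨(disjoint_orthogonalBilin_of_codisjoint hB hUW).mono hU hW, hUW⟩

end CommRing

theorem isPerfPair_domRestrict₁₂_of_le_orthogonalBilin {k M : Type*} [Field k] [AddCommGroup M]
    [Module k M] {B : LinearMap.BilinForm k M} {U W : Submodule k M} [FiniteDimensional k W]
    (hB : B.SeparatingRight) (hB' : B.IsRefl) (hU : U ≤ U.orthogonalBilin B)
    (hW : W ≤ W.orthogonalBilin B) (hUW : Codisjoint U W) :
    (B.domRestrict₁₂ U W).IsPerfPair := by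
  have eq_zero {y : M} (hyU : y ∈ U.orthogonalBilin B) (hyW : y ∈ W.orthogonalBilin B) : y = 0 :=
    Submodule.disjoint_def.mp (disjoint_orthogonalBilin_of_codisjoint hB hUW) y hyU hyW
  refine LinearMap.IsPerfPair.of_injective' ?_ ?_ <;> rw [injective_iff_map_eq_zero]
  · exact fun u hu ↦ Subtype.ext <|
      eq_zero (hU u.2) fun w hw ↦ hB' _ _ (LinearMap.congr_fun hu ⟨w, hw⟩)
  · exact fun w hw ↦ Subtype.ext <|
      eq_zero (fun u hu ↦ LinearMap.congr_fun hw ⟨u, hu⟩) (hW w.2)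

end BilinearForm

section KirillovForm

section CommRing

variable {R L : Type*} [CommRing R] [LieRing L] [LieAlgebra R L]

/-- The Kirillov form `B_f(x, y) = f ⁅x, y⁆` of a functional `f`, as a bilinear form. -/
def kirillovForm (f : Module.Dual R L) : LinearMap.BilinForm R L :=
  (LieModule.toEnd R L L : L →ₗ[R] Module.End R L).compr₂ f

@[simp]
theorem kirillovForm_apply (f : Module.Dual R L) (x y : L) : kirillovForm f x y = f ⁅x, y⁆ := rfl

theorem kirillovForm_isAlt (f : Module.Dual R L) : (kirillovForm f).IsAlt := fun x ↦ by simp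

theorem le_orthogonalBilin_kirillovForm (f : Module.Dual R L) {U : Submodule R L}
    (hU : ∀ x ∈ U, ∀ y ∈ U, ⁅x, y⁆ = 0) : U ≤ U.orthogonalBilin (kirillovForm f) :=
  fun y hy x hx ↦ by rw [kirillovForm_apply, hU x hx y hy, map_zero]

theorem apply_ne_zero_of_lie_eq_smul {f : Module.Dual R L} {U W : Submodule R L}
    (hf : (kirillovForm f).SeparatingRight) (hW : ∀ x ∈ W, ∀ y ∈ W, ⁅x, y⁆ = 0)
    (hUW : Codisjoint U W) {x : L} (hx : x ∈ W) (hx0 : x ≠ 0)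
    {χ : U → R} (hχ : ∀ u : U, ⁅(u : L), x⁆ = χ u • x) : f x ≠ 0 := by
  intro hfx
  have hxU : x ∈ U.orthogonalBilin (kirillovForm f) := fun u hu ↦ by
    rw [kirillovForm_apply, hχ ⟨u, hu⟩, map_smul, hfx, smul_zero]
  exact hx0 <| Submodule.disjoint_def.mp (disjoint_orthogonalBilin_of_codisjoint hf hUW) x hxU
    (le_orthogonalBilin_kirillovForm f hW hx)

end CommRing

variable {k L : Type*} [Field k] [LieRing L] [LieAlgebra k L] {f : Module.Dual k L}
  {U W : Submodule k L} {ι : Type*} {b : Module.Basis ι k W} {α : ι → U → k}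

theorem exists_basis_apply_eq_one_of_lie_eq_smul (hf : (kirillovForm f).SeparatingRight)
    (hW : ∀ x ∈ W, ∀ y ∈ W, ⁅x, y⁆ = 0) (hUW : Codisjoint U W)
    (hb : ∀ i (u : U), ⁅(u : L), (b i : L)⁆ = α i u • (b i : L)) :
    ∃ e : Module.Basis ι k W, (∀ i, f (e i) = 1) ∧
      ∀ i (u : U), ⁅(u : L), (e i : L)⁆ = α i u • (e i : L) := by
  have hfb (i : ι) : f (b i) ≠ 0 := apply_ne_zero_of_lie_eq_smul hf hW hUW (b i).2
    (mt Submodule.coe_eq_zero.mp (b.ne_zero i)) (hb i)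
  refine ⟨b.isUnitSMul fun i ↦ (hfb i).isUnit.inv, fun i ↦ ?_, fun i u ↦ ?_⟩
  · simp [Module.Basis.isUnitSMul_apply, hfb i]
  · simp [Module.Basis.isUnitSMul_apply, hb i u, smul_comm (α i u)]

theorem exists_basis_lie_eq_ite [Finite ι] [DecidableEq ι]
    (hf : (kirillovForm f).SeparatingRight) (hU : ∀ x ∈ U, ∀ y ∈ U, ⁅x, y⁆ = 0)
    (hW : ∀ x ∈ W, ∀ y ∈ W, ⁅x, y⁆ = 0) (hUW : Codisjoint U W) (hfb : ∀ i, f (b i) = 1)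
    (hb : ∀ i (u : U), ⁅(u : L), (b i : L)⁆ = α i u • (b i : L)) :
    ∃ d : Module.Basis ι k U, ∀ i j, ⁅(d i : L), (b j : L)⁆ = if i = j then (b i : L) else 0 := by
  have : FiniteDimensional k W := .of_basis b
  let P := (kirillovForm f).domRestrict₁₂ U W
  have : P.IsPerfPair :=
    isPerfPair_domRestrict₁₂_of_le_orthogonalBilin hf (kirillovForm_isAlt f).isRefl
      (le_orthogonalBilin_kirillovForm f hU) (le_orthogonalBilin_kirillovForm f hW) hUW
  let d := b.dualBasis.map P.toPerfPair.symm
  have hd (i j : ι) : f ⁅(d i : L), (b j : L)⁆ = if j = i then 1 else 0 :=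
    calc
      f ⁅(d i : L), (b j : L)⁆ = P.toPerfPair (d i) (b j) := rfl
      _ = b.dualBasis i (b j) := by rw [Module.Basis.map_apply, LinearEquiv.apply_symm_apply]
      _ = if j = i then 1 else 0 := b.dualBasis_apply_self i j
  have hα (i j : ι) : α j (d i) = if j = i then 1 else 0 := by
    rw [← hd i j, hb, map_smul, hfb, smul_eq_mul, mul_one]
  refine ⟨d, fun i j ↦ ?_⟩
  rw [hb, hα]
  obtain rfl | hij := eq_or_ne i j
  · simp
  · simp [hij, hij.symm]

theorem exists_isPhiBasis_of_codisjoint {n : ℕ} {b : Module.Basis (Fin n) k W}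
    {α : Fin n → U → k} (hf : (kirillovForm f).SeparatingRight)
    (hU : ∀ x ∈ U, ∀ y ∈ U, ⁅x, y⁆ = 0) (hW : ∀ x ∈ W, ∀ y ∈ W, ⁅x, y⁆ = 0)
    (hUW : Codisjoint U W) (hb : ∀ i (u : U), ⁅(u : L), (b i : L)⁆ = α i u • (b i : L)) :
    ∃ B : Module.Basis (Fin n ⊕ Fin n) k L, IsPhiBasis B := by
  obtain ⟨e, hfe, he⟩ := exists_basis_apply_eq_one_of_lie_eq_smul hf hW hUW hb
  obtain ⟨d, hd⟩ := exists_basis_lie_eq_ite hf hU hW hUW hfe he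
  have hUW' : IsCompl U W := isCompl_of_le_orthogonalBilin hf
    (le_orthogonalBilin_kirillovForm f hU) (le_orthogonalBilin_kirillovForm f hW) hUW
  let B := (d.prod e).map (Submodule.prodEquivOfIsCompl U W hUW')
  have hBd (i : Fin n) : B (Sum.inl i) = d i := by simp [B]
  have hBe (i : Fin n) : B (Sum.inr i) = e i := by simp [B]
  refine ⟨B, fun i j ↦ ?_, fun i j ↦ ?_, fun i j ↦ ?_⟩
  · rw [hBd, hBd, hU _ (d i).2 _ (d j).2]
  · rw [hBe, hBe, hW _ (e i).2 _ (e j).2]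
  · rw [hBd, hBe, hBe, hd]

end KirillovForm

section RootPart

open LieModule LieAlgebra

section CommRing

variable {R L : Type*} [CommRing R] [LieRing L] [LieAlgebra R L]

/-- The sum of the weight spaces of nonzero weight for the adjoint action of a subalgebra `T` on
the ambient Lie algebra. The eigenspaces are not generalized ones, and weights are arbitrary
functions on `T`: over a field, one with a nonzero weight space is automatically linear. -/
def rootPart (T : LieSubalgebra R L) : Submodule R L :=
  ⨆ (χ : T → R) (_ : χ ≠ 0), (weightSpace L χ).toSubmodule

theorem weightSpace_le_rootPart {T : LieSubalgebra R L} {χ : T → R} (hχ : χ ≠ 0) :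
    (weightSpace L χ).toSubmodule ≤ rootPart T :=
  le_iSup₂_of_le χ hχ le_rfl

theorem rootPart_eq_span (T : LieSubalgebra R L) :
    rootPart T = Submodule.span R {x : L | ∃ χ : T → R, χ ≠ 0 ∧ x ∈ weightSpace L χ} := by
  refine le_antisymm (iSup₂_le fun χ hχ x hx ↦ Submodule.subset_span ⟨χ, hχ, hx⟩) ?_
  rw [Submodule.span_le]
  rintro x ⟨χ, hχ, hx⟩
  exact weightSpace_le_rootPart hχ hx

end CommRing

variable {k L : Type*} [Field k] [LieRing L] [LieAlgebra k L]

theorem exists_basis_rootPart [FiniteDimensional k L] (T : LieSubalgebra k L) :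
    ∃ (n : ℕ) (b : Module.Basis (Fin n) k (rootPart T)) (α : Fin n → T → k),
      ∀ i, (b i : L) ∈ weightSpace L (α i) := by
  obtain ⟨s, hs, hspan, hli⟩ := exists_linearIndependent k
    {x : L | ∃ χ : T → k, χ ≠ 0 ∧ x ∈ weightSpace L χ}
  choose χ _ hχ using hs
  have : Fintype s := hli.setFinite.fintype
  let b : Module.Basis s k (rootPart T) := (Module.Basis.span hli).map
    (LinearEquiv.ofEq _ _ (by rw [Subtype.range_coe, hspan, rootPart_eq_span]))
  have hb (x : s) : (b x : L) = x := by simp [b, Module.Basis.span_apply]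
  let σ := Fintype.equivFin s
  refine ⟨Fintype.card s, b.reindex σ, fun i ↦ χ (σ.symm i).2, fun i ↦ ?_⟩
  rw [Module.Basis.reindex_apply, hb]
  exact hχ _

theorem weightSpace_le_derivedSeries_one {T : LieSubalgebra k L} {χ : T → k} (hχ : χ ≠ 0) :
    (weightSpace L χ).toSubmodule ≤ (derivedSeries k L 1).toSubmodule := by
  intro x hx
  obtain ⟨t, ht⟩ := Function.ne_iff.mp hχ
  have hx' : x = (χ t)⁻¹ • ⁅(t : L), x⁆ := by
    rw [← LieSubalgebra.coe_bracket_of_module, (mem_weightSpace χ x).mp hx t, inv_smul_smul₀ ht]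
  rw [hx']
  exact Submodule.smul_mem _ _ <|
    LieSubmodule.lie_mem_lie (LieSubmodule.mem_top _) (LieSubmodule.mem_top _)

theorem lie_eq_zero_of_mem_rootPart (h2 : derivedSeries k L 2 = ⊥) {T : LieSubalgebra k L}
    {x y : L} (hx : x ∈ rootPart T) (hy : y ∈ rootPart T) : ⁅x, y⁆ = 0 := by
  have hle : rootPart T ≤ (derivedSeries k L 1).toSubmodule :=
    iSup₂_le fun _ hχ ↦ weightSpace_le_derivedSeries_one hχ
  rw [← LieSubmodule.mem_bot (R := k) (L := L), ← h2]
  exact LieSubmodule.lie_mem_lie (hle hx) (hle hy)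

theorem exists_isPhiBasis_of_codisjoint_rootPart [FiniteDimensional k L] (T : LieSubalgebra k L)
    [IsLieAbelian T] (hT : Codisjoint T.toSubmodule (rootPart T))
    (hF : IsFrobeniusLieAlgebra k L) (h2 : derivedSeries k L 2 = ⊥) :
    ∃ n : ℕ, Module.finrank k L = 2 * n ∧
      ∃ B : Module.Basis (Fin n ⊕ Fin n) k L, IsPhiBasis B := by
  obtain ⟨f, hf⟩ := hF
  obtain ⟨n, b, α, hb⟩ := exists_basis_rootPart T
  have hTT : ∀ x ∈ T.toSubmodule, ∀ y ∈ T.toSubmodule, ⁅x, y⁆ = 0 := fun x hx y hy ↦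
    congrArg Subtype.val (trivial_lie_zero T T ⟨x, hx⟩ ⟨y, hy⟩)
  obtain ⟨B, hB⟩ := exists_isPhiBasis_of_codisjoint hf hTT
    (fun _ hx _ hy ↦ lie_eq_zero_of_mem_rootPart h2 hx hy) hT
    fun i ↦ (mem_weightSpace (α i) (b i : L)).mp (hb i)
  refine ⟨n, ?_, B, hB⟩
  rw [Module.finrank_eq_card_basis B, Fintype.card_sum, Fintype.card_fin, two_mul]

end RootPart

section CartanSubalgebra

open LieModule LieAlgebra

variable {k g : Type*} [Field k] [PerfectField k] [LieRing g] [LieAlgebra k g]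
  [FiniteDimensional k g] [IsKilling k g] {H p : LieSubalgebra k g} [H.IsCartanSubalgebra]
  [IsTriangularizable k H g]

theorem mem_rootPart_ofLe_of_mem_rootSpace (hHp : H ≤ p) {χ : H → k} (hχ : χ ≠ 0) {y : p}
    (hy : (y : g) ∈ rootSpace H χ) : y ∈ rootPart (LieSubalgebra.ofLe hHp) := by
  let toH (t : LieSubalgebra.ofLe hHp) : H := ⟨t, (LieSubalgebra.mem_ofLe hHp t).mp t.2⟩
  obtain ⟨h, hh⟩ := Function.ne_iff.mp hχ
  have hχ' : χ ∘ toH ≠ 0 :=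
    Function.ne_iff.mpr ⟨⟨⟨h, hHp h.2⟩, (LieSubalgebra.mem_ofLe hHp _).mpr h.2⟩, hh⟩
  exact weightSpace_le_rootPart hχ' <| (mem_weightSpace (χ ∘ toH) y).mpr fun t ↦ Subtype.ext <|
    IsKilling.lie_eq_smul_of_mem_rootSpace hy (toH t)

theorem codisjoint_ofLe_rootPart (hHp : H ≤ p) :
    Codisjoint (LieSubalgebra.ofLe hHp).toSubmodule (rootPart (LieSubalgebra.ofLe hHp)) := by
  let P : LieSubmodule k H g :=
    { p.toSubmodule with lie_mem := fun {x _} hm ↦ p.lie_mem (hHp x.2) hm }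
  suffices hP : P.toSubmodule ≤ ((LieSubalgebra.ofLe hHp).toSubmodule ⊔
      rootPart (LieSubalgebra.ofLe hHp)).map p.toSubmodule.subtype by
    refine codisjoint_iff.mpr (eq_top_iff.mpr fun y _ ↦ ?_)
    obtain ⟨z, hz, hzy⟩ := hP y.2
    rwa [← Subtype.ext hzy]
  conv_lhs => rw [eq_iSup_inf_genWeightSpace k H g P, LieSubmodule.iSup_toSubmodule]
  refine iSup_le fun χ y ⟨hyp, hyχ⟩ ↦ ⟨⟨y, hyp⟩, ?_, rfl⟩
  by_cases hχ : χ.IsZero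
  · have hyH : y ∈ rootSpace H (0 : H → k) := hχ.eq ▸ hyχ
    rw [rootSpace_zero_eq] at hyH
    exact Submodule.mem_sup_left ((LieSubalgebra.mem_ofLe hHp _).mpr hyH)
  · exact Submodule.mem_sup_right (mem_rootPart_ofLe_of_mem_rootSpace hHp hχ hyχ)

theorem frobenius_twoStepSolvable_liePoset_iso_phi_general
    (hHp : H ≤ p) (hF : IsFrobeniusLieAlgebra k p) (h2 : derivedSeries k p 2 = ⊥) :
    ∃ n : ℕ, Module.finrank k p = 2 * n ∧
      ∃ B : Module.Basis (Fin n ⊕ Fin n) k p, IsPhiBasis B :=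
  have : IsLieAbelian (LieSubalgebra.ofLe hHp) :=
    (lie_abelian_iff_equiv_lie_abelian (LieSubalgebra.equivOfLe hHp)).mp inferInstance
  exists_isPhiBasis_of_codisjoint_rootPart _ (codisjoint_ofLe_rootPart hHp) hF h2

end CartanSubalgebra

/-- A Frobenius, two-step solvable Lie poset algebra `p` has even dimension `2n`, and is
isomorphic to `Φ_n`, the product of `n` copies of the two-dimensional non-abelian Lie
algebra `t₂`; equivalently, `p` has a basis `{d_1, e_1, …, d_n, e_n}` with
`⁅d_i, e_j⁆ = δ_{ij} e_i` and all other brackets of basis vectors zero. -/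
theorem frobenius_twoStepSolvable_liePoset_iso_phi
    {k : Type*} [Field k] [IsAlgClosed k] [CharZero k]
    {g : Type*} [LieRing g] [LieAlgebra k g] [FiniteDimensional k g]
    [LieAlgebra.IsSemisimple k g]
    (b : LieSubalgebra k g) (hb : IsBorelSubalgebra k b)
    (H : LieSubalgebra k g) [H.IsCartanSubalgebra] (hH : H ≤ b)
    (p : LieSubalgebra k g) (hpl : H ≤ p) (hpu : p ≤ b)
    (hF : IsFrobeniusLieAlgebra k ↥p) (hS : IsTwoStepSolvable k ↥p) :
    ∃ n : ℕ, Module.finrank k ↥p = 2 * n ∧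
      ∃ B : Module.Basis (Fin n ⊕ Fin n) k ↥p, IsPhiBasis B :=
  frobenius_twoStepSolvable_liePoset_iso_phi_general hpl hF hS.2
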